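/- arXiv:2307.11589 — 4 statements merged into one kernel-verified Lean document; each statement's English description precedes it below -/
import Mathlib

section
/- Assume (A,C) is observable with observability index ℓ. Let w be a trajectory of length T of the LTI system and let L satisfy ℓ ≤ L ≤ T. Then im(𝓗_L(w)) = 𝓑|_L if and only if rank(𝓗_L(w)) = mL + n. -/
/-! The restricted behavior is the image of the linear map sending an initial state and an input
sequence of length `L` to the stacked trajectory they generate (`Behavior_eq_range`). Observability
makes this map injective once `ℓ ≤ L` (`trajMap_injective`): the inputs are read off the trajectory,
and if the inputs vanish the outputs are `C A^t x₀`, which determine `x₀`. Hence `𝓑|_L` is a subspace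
of dimension `m L + n`. Every window of a trajectory is a trajectory, so the image of the Hankel matrix
is contained in `𝓑|_L`, and a subspace of a finite-dimensional space is everything exactly
when the dimensions agree. -/

open Matrix

/-- The input part `u(t) ∈ ℝ^m` of a combined variable `w(t) = (u(t); y(t)) ∈ ℝ^{m+p}`. -/
def uPart (m p : ℕ) (w : ℕ → Fin (m + p) → ℝ) (t : ℕ) : Fin m → ℝ :=
  fun i => w t (Fin.castAdd p i)

/-- The output part `y(t) ∈ ℝ^p` of a combined variable `w(t) = (u(t); y(t)) ∈ ℝ^{m+p}`. -/
def yPart (m p : ℕ) (w : ℕ → Fin (m + p) → ℝ) (t : ℕ) : Fin p → ℝ :=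
  fun j => w t (Fin.natAdd m j)

/-- `w = (u; y)` is a trajectory of length `T` of the LTI system `(A,B,C,D)`:
there is a state sequence `x` with `x(t+1) = A x(t) + B u(t)` for `t+1 < T` and
`y(t) = C x(t) + D u(t)` for `t < T`. -/
def IsTraj (m p n : ℕ) (A : Matrix (Fin n) (Fin n) ℝ) (B : Matrix (Fin n) (Fin m) ℝ)
    (C : Matrix (Fin p) (Fin n) ℝ) (D : Matrix (Fin p) (Fin m) ℝ)
    (T : ℕ) (w : ℕ → Fin (m + p) → ℝ) : Prop :=
  ∃ x : ℕ → Fin n → ℝ,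
    (∀ t, t + 1 < T → x (t + 1) = A *ᵥ x t + B *ᵥ uPart m p w t) ∧
    (∀ t, t < T → yPart m p w t = C *ᵥ x t + D *ᵥ uPart m p w t)

/-- The depth-`L` Hankel matrix of a sequence `w : {0,…,T−1} → ℝ^q`.  Its rows are indexed
by pairs `(b, i)` (block position `b ∈ {0,…,L−1}` and coordinate `i ∈ {0,…,q−1}`) and its
`j`-th column is the stacked vector `(w(j); …; w(j+L−1))`. -/
def Hankel (q L T : ℕ) (w : ℕ → Fin q → ℝ) : Matrix (Fin L × Fin q) (Fin (T - L + 1)) ℝ :=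
  fun bi j => w ((j : ℕ) + (bi.1 : ℕ)) bi.2

/-- The restricted behavior `𝓑|_L ⊆ ℝ^{qL}`: all stacked vectors `(w(0); …; w(L−1))` of
trajectories `w` of length `L`. -/
def Behavior (m p n : ℕ) (A : Matrix (Fin n) (Fin n) ℝ) (B : Matrix (Fin n) (Fin m) ℝ)
    (C : Matrix (Fin p) (Fin n) ℝ) (D : Matrix (Fin p) (Fin m) ℝ) (L : ℕ) :
    Set (Fin L × Fin (m + p) → ℝ) :=
  { v | ∃ w : ℕ → Fin (m + p) → ℝ, IsTraj m p n A B C D L w ∧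
      ∀ (t : Fin L) (i : Fin (m + p)), v (t, i) = w (t : ℕ) i }

/-- The order-`k` observability matrix `[C; CA; …; CA^{k−1}]`. -/
def obsMat (p n : ℕ) (A : Matrix (Fin n) (Fin n) ℝ) (C : Matrix (Fin p) (Fin n) ℝ) (k : ℕ) :
    Matrix (Fin k × Fin p) (Fin n) ℝ :=
  fun ri => (C * A ^ (ri.1 : ℕ)) ri.2

/-- `(A,C)` is observable with observability index `ℓ`: `[C; CA; …; CA^{ℓ−1}]` has rank `n`
and `ℓ` is the smallest such integer. -/
def ObsIndex (p n : ℕ) (A : Matrix (Fin n) (Fin n) ℝ) (C : Matrix (Fin p) (Fin n) ℝ)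
    (ℓ : ℕ) : Prop :=
  (obsMat p n A C ℓ).rank = n ∧ ∀ k < ℓ, (obsMat p n A C k).rank ≠ n

/-- The input at time `t`, as a linear function of the pair (initial state, input sequence of
length `L`); it is zero for `t ≥ L`. -/
def inputAt (m n L t : ℕ) :
    ((Fin n → ℝ) × (Fin L → Fin m → ℝ)) →ₗ[ℝ] (Fin m → ℝ) :=
  if h : t < L then LinearMap.proj (⟨t, h⟩ : Fin L) ∘ₗ LinearMap.snd ℝ _ _ else 0

/-- The state at time `t`, as a linear function of the pair (initial state, input sequence). -/
def stateAt (m n L : ℕ) (A : Matrix (Fin n) (Fin n) ℝ) (B : Matrix (Fin n) (Fin m) ℝ) :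
    ℕ → ((Fin n → ℝ) × (Fin L → Fin m → ℝ)) →ₗ[ℝ] (Fin n → ℝ)
  | 0 => LinearMap.fst ℝ _ _
  | t + 1 => A.mulVecLin ∘ₗ stateAt m n L A B t + B.mulVecLin ∘ₗ inputAt m n L t

/-- The output at time `t`, as a linear function of the pair (initial state, input sequence). -/
def outputAt (m p n L : ℕ) (A : Matrix (Fin n) (Fin n) ℝ) (B : Matrix (Fin n) (Fin m) ℝ)
    (C : Matrix (Fin p) (Fin n) ℝ) (D : Matrix (Fin p) (Fin m) ℝ) (t : ℕ) :
    ((Fin n → ℝ) × (Fin L → Fin m → ℝ)) →ₗ[ℝ] (Fin p → ℝ) :=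
  C.mulVecLin ∘ₗ stateAt m n L A B t + D.mulVecLin ∘ₗ inputAt m n L t

/-- The linear map sending an initial state and an input sequence of length `L` to the stacked
trajectory `(u(0); y(0); …; u(L-1); y(L-1))` they generate. -/
def trajMap (m p n L : ℕ) (A : Matrix (Fin n) (Fin n) ℝ) (B : Matrix (Fin n) (Fin m) ℝ)
    (C : Matrix (Fin p) (Fin n) ℝ) (D : Matrix (Fin p) (Fin m) ℝ) :
    ((Fin n → ℝ) × (Fin L → Fin m → ℝ)) →ₗ[ℝ] (Fin L × Fin (m + p) → ℝ) :=
  LinearMap.pi fun ti =>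
    Fin.addCases (motive := fun _ => ((Fin n → ℝ) × (Fin L → Fin m → ℝ)) →ₗ[ℝ] ℝ)
      (fun i => LinearMap.proj i ∘ₗ inputAt m n L ti.1)
      (fun j => LinearMap.proj j ∘ₗ outputAt m p n L A B C D ti.1) ti.2

section

variable {m p n L : ℕ} (A : Matrix (Fin n) (Fin n) ℝ) (B : Matrix (Fin n) (Fin m) ℝ)
  (C : Matrix (Fin p) (Fin n) ℝ) (D : Matrix (Fin p) (Fin m) ℝ)

theorem inputAt_apply (v : (Fin n → ℝ) × (Fin L → Fin m → ℝ)) (t : Fin L) :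
    inputAt m n L t v = v.2 t := by
  simp [inputAt]

theorem inputAt_of_snd_eq_zero (v : (Fin n → ℝ) × (Fin L → Fin m → ℝ)) (hv : v.2 = 0) (t : ℕ) :
    inputAt m n L t v = 0 := by
  unfold inputAt
  split_ifs <;> simp [hv]

theorem trajMap_castAdd (v : (Fin n → ℝ) × (Fin L → Fin m → ℝ)) (t : Fin L) (i : Fin m) :
    trajMap m p n L A B C D v (t, Fin.castAdd p i) = v.2 t i := by
  simp [trajMap, inputAt_apply]

theorem trajMap_natAdd (v : (Fin n → ℝ) × (Fin L → Fin m → ℝ)) (t : Fin L) (j : Fin p) :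
    trajMap m p n L A B C D v (t, Fin.natAdd m j) = outputAt m p n L A B C D t v j := by
  simp [trajMap]

theorem stateAt_of_snd_eq_zero (v : (Fin n → ℝ) × (Fin L → Fin m → ℝ)) (hv : v.2 = 0) (t : ℕ) :
    stateAt m n L A B t v = A ^ t *ᵥ v.1 := by
  induction t with
  | zero => simp [stateAt]
  | succ t ih => simp [stateAt, ih, inputAt_of_snd_eq_zero v hv, pow_succ']

theorem Behavior_eq_range :
    Behavior m p n A B C D L = LinearMap.range (trajMap m p n L A B C D) := by
  ext v
  constructor
  · rintro ⟨w, ⟨x, hx, hy⟩, hv⟩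
    refine ⟨(x 0, fun t => uPart m p w t), ?_⟩
    have hst : ∀ t, t < L →
        stateAt m n L A B t (x 0, fun t : Fin L => uPart m p w t) = x t := by
      intro t
      induction t with
      | zero => intro _; simp [stateAt]
      | succ t ih =>
        intro ht
        have h := inputAt_apply (x 0, fun t : Fin L => uPart m p w t) ⟨t, by omega⟩
        simp only at h
        simp [stateAt, ih (by omega), h, hx t ht]
    ext ⟨t, i⟩
    rw [hv]
    refine Fin.addCases (fun i => ?_) (fun j => ?_) i
    · rw [trajMap_castAdd]; rfl
    · rw [trajMap_natAdd]
      have := congrFun (hy t t.2) j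
      simp only [yPart] at this
      rw [this]
      simp [outputAt, hst t t.2, inputAt_apply]
  · rintro ⟨a, rfl⟩
    refine ⟨fun t => Fin.append (inputAt m n L t a) (outputAt m p n L A B C D t a),
      ⟨fun t => stateAt m n L A B t a, ?_, ?_⟩, ?_⟩
    · intro t _
      have : uPart m p (fun t => Fin.append (inputAt m n L t a) (outputAt m p n L A B C D t a)) t
          = inputAt m n L t a := by ext i; simp [uPart]
      simp [this, stateAt]
    · intro t _
      have : uPart m p (fun t => Fin.append (inputAt m n L t a) (outputAt m p n L A B C D t a)) t
          = inputAt m n L t a := by ext i; simp [uPart]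
      rw [this]
      ext j
      simp [yPart, outputAt]
    · intro t i
      refine Fin.addCases (fun i => ?_) (fun j => ?_) i
      · simp [trajMap_castAdd, inputAt_apply]
      · simp [trajMap_natAdd]

theorem trajMap_injective {ℓ : ℕ} (hrank : (obsMat p n A C ℓ).rank = n) (hL : ℓ ≤ L) :
    Function.Injective (trajMap m p n L A B C D) := by
  rw [injective_iff_map_eq_zero]
  intro v hv
  have h2 : v.2 = 0 := by
    ext t i
    rw [← trajMap_castAdd A B C D v t i, hv]; rfl
  have hker : LinearMap.ker (obsMat p n A C ℓ).mulVecLin = ⊥ := by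
    have := LinearMap.finrank_range_add_finrank_ker (obsMat p n A C ℓ).mulVecLin
    rw [← Matrix.rank, hrank, Module.finrank_fin_fun] at this
    exact Submodule.finrank_eq_zero.mp (by omega)
  have h1 : v.1 = 0 := by
    rw [LinearMap.ker_eq_bot'] at hker
    apply hker
    ext ⟨t, j⟩
    have h := trajMap_natAdd A B C D v ⟨t, t.2.trans_le hL⟩ j
    rw [hv] at h
    simp only [outputAt, LinearMap.add_apply, LinearMap.comp_apply, mulVecLin_apply,
      stateAt_of_snd_eq_zero A B v h2, inputAt_of_snd_eq_zero v h2, mulVec_zero, add_zero,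
      mulVec_mulVec] at h
    exact h.symm
  exact Prod.ext h1 h2

/-- Every column of the Hankel matrix is a window of the trajectory, hence lies in the restricted
behavior. -/
theorem range_Hankel_le {T : ℕ} (hLT : L ≤ T) (w : ℕ → Fin (m + p) → ℝ)
    (hw : IsTraj m p n A B C D T w) :
    LinearMap.range (Hankel (m + p) L T w).mulVecLin ≤
      LinearMap.range (trajMap m p n L A B C D) := by
  rw [Matrix.range_mulVecLin, Submodule.span_le]
  rintro _ ⟨j, rfl⟩
  rw [← Behavior_eq_range]
  obtain ⟨x, hx, hy⟩ := hw
  have hj := j.2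
  refine ⟨fun t => w (j + t), ⟨fun t => x (j + t), ?_, ?_⟩, fun t i => rfl⟩
  · intro t ht
    exact hx (j + t) (by omega)
  · intro t ht
    exact hy (j + t) (by omega)

end

/-- For an observable system with observability index `ℓ` and `ℓ ≤ L ≤ T`:
`im(𝓗_L(w)) = 𝓑|_L` if and only if `rank 𝓗_L(w) = mL + n`. -/
theorem stmt3 (m p n ℓ : ℕ) (hp : 1 ≤ p) (hn : 1 ≤ n)
    (A : Matrix (Fin n) (Fin n) ℝ) (B : Matrix (Fin n) (Fin m) ℝ)
    (C : Matrix (Fin p) (Fin n) ℝ) (D : Matrix (Fin p) (Fin m) ℝ)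
    (hobs : ObsIndex p n A C ℓ)
    (T L : ℕ) (hL1 : ℓ ≤ L) (hL2 : L ≤ T)
    (w : ℕ → Fin (m + p) → ℝ) (hw : IsTraj m p n A B C D T w) :
    (↑(LinearMap.range (Hankel (m + p) L T w).mulVecLin) = Behavior m p n A B C D L)
      ↔ (Hankel (m + p) L T w).rank = m * L + n := by
  have hle := range_Hankel_le A B C D hL2 w hw
  have hfin : Module.finrank ℝ (LinearMap.range (trajMap m p n L A B C D)) = m * L + n := by
    rw [LinearMap.finrank_range_of_inj (trajMap_injective A B C D hobs.1 hL1)]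
    simp [Module.finrank_prod, Module.finrank_pi_fintype]
    ring
  rw [Behavior_eq_range, SetLike.coe_set_eq, ← hfin, Matrix.rank]
  exact ⟨fun h => by rw [h], fun h => Submodule.eq_of_le_of_finrank_eq hle h⟩
end

section
/- Assume (A,C) is observable with observability index ℓ. Let d ≥ ℓ+1 and let w be a trajectory of length T ≥ d of the LTI system with rank(𝓗_d(w)) = md + n. Then: (i) the left kernel of 𝓗_d(w) has dimension pd − n; and (ii) every row vector r ∈ ℝ^{1×qd} with r·𝓗_d(w) = 0 is an annihilator of the system, i.e., for every trajectory w̄ of every length T̄ ≥ d one has r·𝓗_d(w̄) = 0. -/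
/-!
Every length-`d` window of a trajectory is determined linearly by the state at its start and the
`d` inputs inside it, so all windows lie in the range of one linear map `windowMap` on a space of
dimension `md + n`. The columns of `𝓗_d(w)` are such windows, and the rank hypothesis says that
they span a space of dimension `md + n`; hence they span the whole range of `windowMap`. A row
vector orthogonal to the columns of `𝓗_d(w)` is therefore orthogonal to every window of every
trajectory, which is (ii). Part (i) is rank-nullity for the transpose.
-/

open Matrix

/-- The input at time `t` as a linear function of (initial state, `d` inputs); it is set to `0`
for `t ≥ d`. -/
def inputMap (m n d t : ℕ) : ((Fin n → ℝ) × (Fin d → Fin m → ℝ)) →ₗ[ℝ] (Fin m → ℝ) :=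
  if h : t < d then LinearMap.proj ⟨t, h⟩ ∘ₗ LinearMap.snd ℝ _ _ else 0

/-- The state at time `t` as a linear function of (initial state, `d` inputs). -/
def stateMap (m n d : ℕ) (A : Matrix (Fin n) (Fin n) ℝ) (B : Matrix (Fin n) (Fin m) ℝ) :
    ℕ → ((Fin n → ℝ) × (Fin d → Fin m → ℝ)) →ₗ[ℝ] (Fin n → ℝ)
  | 0 => LinearMap.fst ℝ _ _
  | t + 1 => A.mulVecLin ∘ₗ stateMap m n d A B t + B.mulVecLin ∘ₗ inputMap m n d t

/-- The stacked window `(w(0); …; w(d-1))` as a linear function of (initial state, `d` inputs). -/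
def windowMap (m p n d : ℕ) (A : Matrix (Fin n) (Fin n) ℝ) (B : Matrix (Fin n) (Fin m) ℝ)
    (C : Matrix (Fin p) (Fin n) ℝ) (D : Matrix (Fin p) (Fin m) ℝ) :
    ((Fin n → ℝ) × (Fin d → Fin m → ℝ)) →ₗ[ℝ] (Fin d × Fin (m + p) → ℝ) :=
  LinearMap.pi fun bi =>
    Fin.addCases (motive := fun _ => ((Fin n → ℝ) × (Fin d → Fin m → ℝ)) →ₗ[ℝ] ℝ)
      (fun i => LinearMap.proj i ∘ₗ inputMap m n d bi.1)
      (fun k => LinearMap.proj k ∘ₗ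
        (C.mulVecLin ∘ₗ stateMap m n d A B bi.1 + D.mulVecLin ∘ₗ inputMap m n d bi.1))
      bi.2

/-- The `j`-th column of the Hankel matrix of a trajectory is the image under `windowMap` of the
state at time `j` and the inputs at times `j, …, j + d - 1`. -/
theorem hankel_col_mem_range {m p n d T : ℕ} {A : Matrix (Fin n) (Fin n) ℝ}
    {B : Matrix (Fin n) (Fin m) ℝ} {C : Matrix (Fin p) (Fin n) ℝ} {D : Matrix (Fin p) (Fin m) ℝ}
    (hT : d ≤ T) {w : ℕ → Fin (m + p) → ℝ} (hw : IsTraj m p n A B C D T w)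
    (j : Fin (T - d + 1)) :
    (Hankel (m + p) d T w).col j ∈ LinearMap.range (windowMap m p n d A B C D) := by
  obtain ⟨x, hx, hy⟩ := hw
  have hj : (j : ℕ) + d ≤ T := by omega
  set z : (Fin n → ℝ) × (Fin d → Fin m → ℝ) :=
    (x j, fun b => uPart m p w ((j : ℕ) + (b : ℕ))) with hz
  have hin : ∀ t, t < d → inputMap m n d t z = uPart m p w ((j : ℕ) + t) := by
    intro t ht
    simp [inputMap, ht, hz]
  have hst : ∀ t, t < d → stateMap m n d A B t z = x ((j : ℕ) + t) := by
    intro t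
    induction t with
    | zero => intro _; simp [stateMap, hz]
    | succ t ih =>
      intro ht
      rw [← Nat.add_assoc, hx _ (by omega), ← ih (by omega), ← hin t (by omega)]
      simp [stateMap]
  refine ⟨z, ?_⟩
  funext bi
  obtain ⟨b, i⟩ := bi
  refine Fin.addCases (fun i => ?_) (fun k => ?_) i
  · simp [windowMap, hin b b.2, Hankel, uPart, Matrix.col]
  · have := congrFun (hy ((j : ℕ) + b) (by omega)) k
    simp only [yPart] at this
    simp [windowMap, hin b b.2, hst b b.2, Hankel, Matrix.col, this]

theorem finrank_range_windowMap_le (m p n d : ℕ) (A : Matrix (Fin n) (Fin n) ℝ)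
    (B : Matrix (Fin n) (Fin m) ℝ) (C : Matrix (Fin p) (Fin n) ℝ) (D : Matrix (Fin p) (Fin m) ℝ) :
    Module.finrank ℝ (LinearMap.range (windowMap m p n d A B C D)) ≤ m * d + n := by
  refine (LinearMap.finrank_range_le _).trans (le_of_eq ?_)
  simp [Module.finrank_pi_fintype]
  ring

/-- If `rank 𝓗_d(w) = md + n` with `d ≥ ℓ+1`, then (i) the left kernel of
`𝓗_d(w)` has dimension `pd − n`, and (ii) every row vector `r` with `r·𝓗_d(w) = 0` is an
annihilator: `r·𝓗_d(w̄) = 0` for every trajectory `w̄` of every length `T̄ ≥ d`. -/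
theorem stmt6 (m p n ℓ : ℕ) (hp : 1 ≤ p) (hn : 1 ≤ n)
    (A : Matrix (Fin n) (Fin n) ℝ) (B : Matrix (Fin n) (Fin m) ℝ)
    (C : Matrix (Fin p) (Fin n) ℝ) (D : Matrix (Fin p) (Fin m) ℝ)
    (hobs : ObsIndex p n A C ℓ)
    (d T : ℕ) (hd : ℓ + 1 ≤ d) (hT : d ≤ T)
    (w : ℕ → Fin (m + p) → ℝ) (hw : IsTraj m p n A B C D T w)
    (hrank : (Hankel (m + p) d T w).rank = m * d + n) :
    Module.finrank ℝ (LinearMap.ker (Hankel (m + p) d T w).vecMulLinear) = p * d - n ∧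
    ∀ r : Fin d × Fin (m + p) → ℝ, r ᵥ* Hankel (m + p) d T w = 0 →
      ∀ T' : ℕ, d ≤ T' → ∀ w' : ℕ → Fin (m + p) → ℝ, IsTraj m p n A B C D T' w' →
        r ᵥ* Hankel (m + p) d T' w' = 0 := by
  have hrange : LinearMap.range (Hankel (m + p) d T w).mulVecLin =
      LinearMap.range (windowMap m p n d A B C D) := by
    refine Submodule.eq_of_le_of_finrank_le ?_ ?_
    · rw [Matrix.range_mulVecLin, Submodule.span_le]
      rintro _ ⟨j, rfl⟩
      exact hankel_col_mem_range hT hw j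
    · exact (finrank_range_windowMap_le m p n d A B C D).trans hrank.symm.le
  refine ⟨?_, ?_⟩
  · have h1 := LinearMap.finrank_range_add_finrank_ker (Hankel (m + p) d T w).vecMulLinear
    have h2 : Module.finrank ℝ (LinearMap.range (Hankel (m + p) d T w).vecMulLinear) =
        m * d + n := by
      rw [← hrank, ← Matrix.rank_transpose, Matrix.rank, Matrix.mulVecLin_transpose]
    have h3 : Module.finrank ℝ (Fin d × Fin (m + p) → ℝ) = m * d + p * d := by
      simp
      ring
    omega
  · intro r hr T' hT' w' hw'
    funext j
    obtain ⟨v, hv⟩ := hrange.symm.le (hankel_col_mem_range hT' hw' j)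
    have h : r ⬝ᵥ (Hankel (m + p) d T' w').col j = 0 := by
      rw [← hv, Matrix.mulVecLin_apply, Matrix.dotProduct_mulVec, hr, zero_dotProduct]
    exact h
end

section
/- Let q ≥ 1, let w̄ : {0,…,T̄−1} → ℝ^q be any sequence, let d ≤ L ≤ T̄, let p ≤ g, and let R_d ∈ ℝ^{g×qd} satisfy R_d·𝓗_d(w̄) = 0. Then the shift matrix Γ ∈ ℝ^{(g+(L−d)p)×qL} built from R_d satisfies Γ·𝓗_L(w̄) = 0. -/
/-!
A row of the shift matrix is a row of `R` translated by `k` blocks, with `k + d ≤ L`. Pairing it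
with column `j` of the depth-`L` Hankel matrix only sees the window `w(j+k), …, w(j+k+d-1)`, so
the product is the pairing of that row of `R` with column `j + k` of the depth-`d` Hankel matrix
(`shifted_row_sum`). That column exists since `j + k ≤ (T - L) + (L - d) = T - d`, and the
pairing vanishes by hypothesis.
-/

open Matrix

/-- The shift matrix `Γ ∈ ℝ^{(g+(L−d)p)×qL}` built from `R ∈ ℝ^{g×qd}`: its first `g` rows
are the rows of `R` each followed by `q(L−d)` zeros; for each `k = 1,…,L−d`, the next `p`
rows are the first `p` rows of `R` preceded by `qk` zeros and followed by `q(L−d−k)` zeros.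
Rows are indexed by `Fin (g + (L−d)*p)`; columns by pairs (block position, coordinate). -/
def shiftMat (q d L g p : ℕ) (R : Matrix (Fin g) (Fin d × Fin q) ℝ) :
    Matrix (Fin (g + (L - d) * p)) (Fin L × Fin q) ℝ :=
  fun r c =>
    if hr : (r : ℕ) < g then
      -- row `r` of `R` followed by zeros
      if hb : (c.1 : ℕ) < d then R ⟨(r : ℕ), hr⟩ (⟨(c.1 : ℕ), hb⟩, c.2) else 0
    else
      -- row `s` (one of the first `p` rows of `R`), shifted by `k` block positions
      (if h : ((r : ℕ) - g) / p + 1 ≤ (c.1 : ℕ) ∧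
              (c.1 : ℕ) - (((r : ℕ) - g) / p + 1) < d ∧ ((r : ℕ) - g) % p < g then
        R ⟨((r : ℕ) - g) % p, h.2.2⟩ (⟨(c.1 : ℕ) - (((r : ℕ) - g) / p + 1), h.2.1⟩, c.2)
      else 0)

/-- A row `f` supported on the blocks `k, …, k + d - 1`, where it agrees with row `i` of `R`,
annihilates every column of the depth-`L` Hankel matrix. -/
theorem shifted_row_sum {q T d L g : ℕ} {w : ℕ → Fin q → ℝ} (hLT : L ≤ T)
    {R : Matrix (Fin g) (Fin d × Fin q) ℝ} (hR : R * Hankel q d T w = 0)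
    (i : Fin g) (k : ℕ) (hk : k + d ≤ L) (f : Fin L × Fin q → ℝ)
    (hf : ∀ (b : Fin d) (c : Fin q), f (⟨k + b, by omega⟩, c) = R i (b, c))
    (hf0 : ∀ x : Fin L × Fin q, ((x.1 : ℕ) < k ∨ k + d ≤ (x.1 : ℕ)) → f x = 0)
    (j : Fin (T - L + 1)) : ∑ x, f x * Hankel q L T w x j = 0 := by
  have h := congrFun (congrFun hR i) ⟨j + k, by omega⟩
  rw [Matrix.mul_apply, Matrix.zero_apply] at h
  rw [← h]
  symm
  refine Fintype.sum_of_injective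
    (fun x : Fin d × Fin q => ((⟨k + x.1, by omega⟩ : Fin L), x.2)) ?_ _ _ ?_ ?_
  · rintro ⟨a, c⟩ ⟨a₂, c₂⟩ hx
    simp only [Prod.mk.injEq, Fin.mk.injEq] at hx
    ext
    · have := hx.1
      simp only
      omega
    · simp [hx.2]
  · rintro ⟨b, c⟩ hx
    rw [hf0, zero_mul]
    by_contra hb
    simp only at hb
    exact hx ⟨(⟨b - k, by omega⟩, c), by ext <;> simp; omega⟩
  · rintro ⟨b, c⟩
    simp [hf, Hankel, add_assoc]

/-- If `R·𝓗_d(w̄) = 0` then the shift matrix `Γ` built from `R` satisfies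
`Γ·𝓗_L(w̄) = 0`, for any `d ≤ L ≤ T̄` and `p ≤ g`. -/
theorem stmt7 (q : ℕ) (hq : 1 ≤ q) (Tbar : ℕ) (wbar : ℕ → Fin q → ℝ)
    (d L : ℕ) (hdL : d ≤ L) (hLT : L ≤ Tbar)
    (g p : ℕ) (hpg : p ≤ g)
    (R : Matrix (Fin g) (Fin d × Fin q) ℝ)
    (hR : R * Hankel q d Tbar wbar = 0) :
    shiftMat q d L g p R * Hankel q L Tbar wbar = 0 := by
  ext r j
  rw [Matrix.mul_apply, Matrix.zero_apply]
  by_cases hr : (r : ℕ) < g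
  · refine shifted_row_sum hLT hR ⟨r, hr⟩ 0 (by omega) _ ?_ ?_ j
    · intro b c
      simp [shiftMat, hr]
    · intro x hx
      have : ¬ (x.1 : ℕ) < d := by omega
      simp [shiftMat, hr, this]
  · -- a row with index at least `g` exists only if `p > 0`, so division by `p` is genuine
    have hrp : (r : ℕ) - g < (L - d) * p := by omega
    have hp : 0 < p := Nat.pos_of_ne_zero (by rintro rfl; simp at hrp)
    have hdiv : ((r : ℕ) - g) / p < L - d := (Nat.div_lt_iff_lt_mul hp).2 hrp
    have hmod : ((r : ℕ) - g) % p < g := (Nat.mod_lt _ hp).trans_le hpg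
    refine shifted_row_sum hLT hR ⟨((r : ℕ) - g) % p, hmod⟩ (((r : ℕ) - g) / p + 1)
      (by omega) _ ?_ ?_ j
    · intro b c
      simp [shiftMat, hr, hmod]
    · intro x hx
      simp only [shiftMat, hr, dite_false]
      exact dif_neg (by omega)
end

section
/- Assume (A,B) is controllable, (A,C) is observable with observability index ℓ ≥ 2, rank(C) = p < n, and Assumption 1 holds. Let n_c ∈ ℕ and let w = (u; y) be a trajectory of length T ≥ (n_c−1)(ℓ+1) + n + ℓ + 3 of the LTI system such that the mosaic input matrix 𝓗_{[0,n+ℓ+2]}(u) has rank m(n+ℓ+3). Then rank(𝓗_{ℓ+2}(w)) = m(ℓ+2) + n, so the left kernel of 𝓗_{ℓ+2}(w) has dimension p(ℓ+2) − n, and this left kernel is spanned by V1 ∪ V2, where for i ∈ {1,2}, V_i is the set of row vectors z ∈ ℝ^{1×q(ℓ+2)} with z·𝓗_{ℓ+2}(w) = 0 whose entries at the p output coordinates of block position ℓ+1−i (i.e., entries (ℓ+1−i)q+m+1 through (ℓ+2−i)q) are all zero. -/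
/-!
The proof is a version of the fundamental lemma of Willems, followed by linear algebra on the
observability matrix.

Write a row vector as `z = (η, ζ)`, with input coefficients `η_b` and output coefficients `ζ_b`.
Along a trajectory with state `x`, the window starting at `t` satisfies
`z · w[t, t+L) = (∑ ζ_k C A^k) x(t) + ∑ (η_b - η_b(ζ)) u(t+b)`, where
`η_b(ζ) = -∑_{k ≥ b} ζ_k M_{k-b}` and `M` are the Markov parameters (`pairing_eq`).

Persistency of excitation (`relation_trivial`) says that a relation
`ξ x(t) + ∑ η_b u(t+b) = 0` valid for all `t` is trivial. Shift it by `k = 0, …, n`, rewrite it in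
terms of `x(t)`, and combine the shifts with the coefficients of the characteristic polynomial of
`A`: by Cayley–Hamilton the state disappears, and full row rank of the mosaic input matrix kills
every input coefficient. Since the characteristic polynomial is monic, descending induction gives
`η = 0` and `ξ A^i B = 0` for `i < n`, hence `ξ = 0` by controllability.

So the left kernel of the Hankel matrix is the isomorphic image, under `ζ ↦ (η(ζ), ζ)`, of the
left kernel of `[C; CA; …; CA^{ℓ+1}]` (`ker_hankel_eq`), and the dimensions follow from
observability. For the spanning claim it suffices to split `ζ` (`split_output`): by
Assumption 1, `ζ_{ℓ-1} C A^{ℓ-1}` is a combination of the rows of `C, …, CA^{ℓ-2}, CA^{ℓ+1}`,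
which produces a kernel element with block `ℓ` zero and the same block `ℓ-1` as `ζ`.
-/

open Matrix

/-- The controllability matrix `[B, AB, …, A^{n−1}B]` (columns indexed by pairs). -/
def ctrbMat (m n : ℕ) (A : Matrix (Fin n) (Fin n) ℝ) (B : Matrix (Fin n) (Fin m) ℝ) :
    Matrix (Fin n) (Fin n × Fin m) ℝ :=
  fun i c => (A ^ (c.1 : ℕ) * B) i c.2

/-- `(A,B)` is controllable: the controllability matrix has rank `n`. -/
def Controllable (m n : ℕ) (A : Matrix (Fin n) (Fin n) ℝ) (B : Matrix (Fin n) (Fin m) ℝ) :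
    Prop :=
  (ctrbMat m n A B).rank = n

/-- The matrix `𝓞_s = [C; CA; …; CA^{ℓ−2}; CA^{ℓ+1}] ∈ ℝ^{pℓ×n}` of Assumption 1. -/
def obsSMat (p n ℓ : ℕ) (A : Matrix (Fin n) (Fin n) ℝ) (C : Matrix (Fin p) (Fin n) ℝ) :
    Matrix (Fin ℓ × Fin p) (Fin n) ℝ :=
  fun ri => (C * A ^ (if (ri.1 : ℕ) < ℓ - 1 then (ri.1 : ℕ) else ℓ + 1)) ri.2

/-- The mosaic input matrix `𝓗_{[0,n+ℓ+2]}(u) ∈ ℝ^{m(n+ℓ+3)×n_c}`: its `j`-th column is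
the stacked vector `(u(j(ℓ+1)); u(j(ℓ+1)+1); …; u(j(ℓ+1)+n+ℓ+2))`. -/
def mosaicInput (m n ℓ nc : ℕ) (u : ℕ → Fin m → ℝ) :
    Matrix (Fin (n + ℓ + 3) × Fin m) (Fin nc) ℝ :=
  fun ri j => u ((j : ℕ) * (ℓ + 1) + (ri.1 : ℕ)) ri.2

/-- The matrix `H̄` with window offset `s` and deleted output position `δ`: its `j`-th
column is the stacked window `(w(s_j); …; w(s_j+ℓ+1))` with `s_j = j(ℓ+1)+s`, keeping all
inputs and deleting the output block at window position `δ`. -/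
def Hbar (m p ℓ nc : ℕ) (s δ : ℕ) (u : ℕ → Fin m → ℝ) (y : ℕ → Fin p → ℝ) :
    Matrix ((Fin (ℓ + 2) × Fin m) ⊕ (Fin (ℓ + 1) × Fin p)) (Fin nc) ℝ :=
  fun ri j =>
    match ri with
    | Sum.inl ti => u ((j : ℕ) * (ℓ + 1) + s + (ti.1 : ℕ)) ti.2
    | Sum.inr ti => y ((j : ℕ) * (ℓ + 1) + s +
        (if (ti.1 : ℕ) < δ then (ti.1 : ℕ) else (ti.1 : ℕ) + 1)) ti.2


/-! ### Rank and left kernels -/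

theorem finrank_ker_vecMul_add_rank {α β : Type*} [Fintype α] [Fintype β] (M : Matrix α β ℝ) :
    Module.finrank ℝ (LinearMap.ker M.vecMulLinear) + M.rank = Fintype.card α := by
  classical
  have h := LinearMap.finrank_range_add_finrank_ker M.vecMulLinear
  rw [range_vecMulLinear, ← Matrix.rank_eq_finrank_span_row, Module.finrank_pi] at h
  omega

theorem vecMul_eq_zero_of_rank {α β : Type*} [Fintype α] [Fintype β] {M : Matrix α β ℝ}
    (h : M.rank = Fintype.card α) {z : α → ℝ} (hz : z ᵥ* M = 0) : z = 0 := by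
  have h1 := finrank_ker_vecMul_add_rank M
  have h2 : LinearMap.ker M.vecMulLinear = ⊥ := by
    rw [← Submodule.finrank_eq_zero]; omega
  have h3 : z ∈ LinearMap.ker M.vecMulLinear := by simpa using hz
  rw [h2] at h3
  simpa using h3

theorem exists_vecMul_eq_of_rank {α β : Type*} [Fintype α] [Fintype β] {M : Matrix α β ℝ}
    (h : M.rank = Fintype.card β) (r : β → ℝ) : ∃ z, z ᵥ* M = r := by
  have h2 : LinearMap.range M.vecMulLinear = ⊤ := by
    apply Submodule.eq_top_of_finrank_eq
    rw [range_vecMulLinear, ← Matrix.rank_eq_finrank_span_row, Module.finrank_pi, h]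
  obtain ⟨z, hz⟩ := LinearMap.range_eq_top.mp h2 r
  exact ⟨z, by simpa using hz⟩

/-! ### States and outputs in terms of an initial state -/

theorem state_iter {m n T : ℕ} {A : Matrix (Fin n) (Fin n) ℝ} {B : Matrix (Fin n) (Fin m) ℝ}
    {x : ℕ → Fin n → ℝ} {u : ℕ → Fin m → ℝ}
    (hx : ∀ t, t + 1 < T → x (t + 1) = A *ᵥ x t + B *ᵥ u t) (t k : ℕ) (h : t + k < T) :
    x (t + k) = A ^ k *ᵥ x t +
      ∑ i ∈ Finset.range k, (A ^ (k - 1 - i) * B) *ᵥ u (t + i) := by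
  induction k with
  | zero => simp
  | succ k ih =>
    rw [← add_assoc, hx _ (by omega), ih (by omega), Finset.sum_range_succ, Matrix.mulVec_add,
      Matrix.mulVec_mulVec, ← pow_succ', Matrix.mulVec_sum, add_assoc]
    congr 2
    · refine Finset.sum_congr rfl fun i hi => ?_
      have hi := Finset.mem_range.mp hi
      rw [Matrix.mulVec_mulVec, ← Matrix.mul_assoc, ← pow_succ']
      congr 4
      omega
    · simp

/-- The Markov parameters `D, CB, CAB, CA²B, …` of the system. -/
def markov {m p n : ℕ} (A : Matrix (Fin n) (Fin n) ℝ) (B : Matrix (Fin n) (Fin m) ℝ)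
    (C : Matrix (Fin p) (Fin n) ℝ) (D : Matrix (Fin p) (Fin m) ℝ) :
    ℕ → Matrix (Fin p) (Fin m) ℝ
  | 0 => D
  | d + 1 => C * A ^ d * B

theorem output_iter {m p n T : ℕ} {A : Matrix (Fin n) (Fin n) ℝ} {B : Matrix (Fin n) (Fin m) ℝ}
    {C : Matrix (Fin p) (Fin n) ℝ} {D : Matrix (Fin p) (Fin m) ℝ}
    {x : ℕ → Fin n → ℝ} {u : ℕ → Fin m → ℝ} {y : ℕ → Fin p → ℝ}
    (hx : ∀ t, t + 1 < T → x (t + 1) = A *ᵥ x t + B *ᵥ u t)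
    (hy : ∀ t, t < T → y t = C *ᵥ x t + D *ᵥ u t) (t k L : ℕ) (hk : k < L) (h : t + k < T) :
    y (t + k) = (C * A ^ k) *ᵥ x t +
      ∑ b : Fin L, if (b : ℕ) ≤ k then markov A B C D (k - b) *ᵥ u (t + b) else 0 := by
  rw [← Finset.sum_range fun b => if b ≤ k then markov A B C D (k - b) *ᵥ u (t + b) else 0,
    ← Finset.sum_filter]
  have : (Finset.range L).filter (· ≤ k) = Finset.range (k + 1) := by
    ext; simp; omega
  rw [this, Finset.sum_range_succ, hy _ h, state_iter hx t k h, Matrix.mulVec_add,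
    Matrix.mulVec_mulVec, Matrix.mulVec_sum, add_assoc]
  congr 2
  · refine Finset.sum_congr rfl fun i hi => ?_
    have hi := Finset.mem_range.mp hi
    obtain ⟨d, rfl⟩ := Nat.exists_eq_add_of_lt hi
    rw [Matrix.mulVec_mulVec, show i + d + 1 - i = d + 1 by omega,
      show i + d + 1 - 1 - i = d by omega, markov, Matrix.mul_assoc]
  · simp [markov]

/-! ### Persistency of excitation -/

/-- The coefficient sequence `η_{L-1}, …, η_0, ξB, ξAB, ξA²B, …`. Shifting the relation
`ξ x(t) + ∑ η_b u(t+b) = 0` by `k` and eliminating the later states makes the coefficient of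
`u(t+i)` equal to the term of index `L+k-1-i` (when `i < L+k`). -/
def relCoeff {m n : ℕ} (A : Matrix (Fin n) (Fin n) ℝ) (B : Matrix (Fin n) (Fin m) ℝ) (L : ℕ)
    (ξ : Fin n → ℝ) (η : Fin L → Fin m → ℝ) (s : ℕ) : Fin m → ℝ :=
  if h : s < L then η ⟨L - 1 - s, by omega⟩ else ξ ᵥ* (A ^ (s - L) * B)

theorem shifted_relation {m n T L : ℕ} {A : Matrix (Fin n) (Fin n) ℝ}
    {B : Matrix (Fin n) (Fin m) ℝ} {x : ℕ → Fin n → ℝ} {u : ℕ → Fin m → ℝ}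
    (hx : ∀ t, t + 1 < T → x (t + 1) = A *ᵥ x t + B *ᵥ u t)
    (ξ : Fin n → ℝ) (η : Fin L → Fin m → ℝ)
    (hrel : ∀ t, t + L ≤ T → ξ ⬝ᵥ x t + ∑ b : Fin L, η b ⬝ᵥ u (t + b) = 0) (hL : 1 ≤ L)
    (t k : ℕ) (h : t + k + L ≤ T) :
    (ξ ᵥ* A ^ k) ⬝ᵥ x t +
      ∑ i ∈ Finset.range (k + L), relCoeff A B L ξ η (L + k - 1 - i) ⬝ᵥ u (t + i) = 0 := by
  rw [← hrel (t + k) h, state_iter hx t k (by omega), Finset.sum_range_add, dotProduct_add,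
    add_assoc, ← Matrix.dotProduct_mulVec, dotProduct_sum, Finset.sum_range (n := L)]
  congr 2
  · refine Finset.sum_congr rfl fun i hi => ?_
    have hi := Finset.mem_range.mp hi
    rw [relCoeff, dif_neg (by omega), ← Matrix.dotProduct_mulVec,
      show L + k - 1 - i - L = k - 1 - i by omega]
  · refine Finset.sum_congr rfl fun b _ => ?_
    rw [relCoeff, dif_pos (by omega), add_assoc]
    congr 2
    ext
    simp
    omega

/-- Persistency of excitation: if the length-`N` input windows starting at the times `τ j` span
everything and `N ≥ n + L`, no nontrivial linear relation between the state `x(t)` and the inputs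
`u(t), …, u(t+L-1)` holds for all `t`. -/
theorem relation_trivial {m n T L N nc : ℕ} {A : Matrix (Fin n) (Fin n) ℝ}
    {B : Matrix (Fin n) (Fin m) ℝ} {x : ℕ → Fin n → ℝ} {u : ℕ → Fin m → ℝ}
    (hx : ∀ t, t + 1 < T → x (t + 1) = A *ᵥ x t + B *ᵥ u t)
    (hctrb : Controllable m n A B) (hL : 1 ≤ L) (hN : n + L ≤ N) (τ : Fin nc → ℕ)
    (hτ : ∀ j, τ j + n + L ≤ T)
    (hPE : ∀ G : Fin N × Fin m → ℝ, (∀ j, ∑ r, G r * u (τ j + r.1) r.2 = 0) → G = 0)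
    (ξ : Fin n → ℝ) (η : Fin L → Fin m → ℝ)
    (hrel : ∀ t, t + L ≤ T → ξ ⬝ᵥ x t + ∑ b : Fin L, η b ⬝ᵥ u (t + b) = 0) :
    ξ = 0 ∧ η = 0 := by
  set c : ℕ → ℝ := fun k => A.charpoly.coeff k with hc
  have hdeg : A.charpoly.natDegree = n := by simp [Matrix.charpoly_natDegree_eq_dim]
  have hcn : c n = 1 := by
    have := A.charpoly_monic.coeff_natDegree
    rwa [hdeg] at this
  have hCH : ∑ k ∈ Finset.range (n + 1), c k • A ^ k = 0 := by
    have := A.aeval_self_charpoly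
    rwa [Polynomial.aeval_eq_sum_range, hdeg] at this
  set h := relCoeff A B L ξ η with hh
  -- The Cayley–Hamilton combination of the shifted relations no longer involves the state.
  let G : ℕ → Fin m → ℝ := fun i =>
    ∑ k ∈ Finset.range (n + 1), if i < k + L then c k • h (L + k - 1 - i) else 0
  have hG0 : ∀ j, ∑ i ∈ Finset.range N, G i ⬝ᵥ u (τ j + i) = 0 := by
    intro j
    have h1 : ∀ k ∈ Finset.range (n + 1), c k * ((ξ ᵥ* A ^ k) ⬝ᵥ x (τ j)) +
        ∑ i ∈ Finset.range N,
          (if i < k + L then c k • h (L + k - 1 - i) else 0) ⬝ᵥ u (τ j + i) = 0 := by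
      intro k hk
      have hk := Finset.mem_range.mp hk
      have h2 := shifted_relation hx ξ η hrel hL (τ j) k (by have := hτ j; omega)
      have h3 : ∑ i ∈ Finset.range N,
          (if i < k + L then c k • h (L + k - 1 - i) else 0) ⬝ᵥ u (τ j + i) =
          c k * ∑ i ∈ Finset.range (k + L), h (L + k - 1 - i) ⬝ᵥ u (τ j + i) := by
        rw [Finset.mul_sum]
        symm
        refine Finset.sum_subset_zero_on_sdiff
          (Finset.range_subset_range.mpr (by omega)) ?_ ?_
        · intro i hi
          simp at hi
          rw [if_neg (by omega), zero_dotProduct]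
        · intro i hi
          simp at hi
          rw [if_pos hi, smul_dotProduct, smul_eq_mul]
      rw [h3, ← mul_add, h2, mul_zero]
    have h4 := Finset.sum_eq_zero h1
    rw [Finset.sum_add_distrib] at h4
    have h5 : ∑ k ∈ Finset.range (n + 1), c k * ((ξ ᵥ* A ^ k) ⬝ᵥ x (τ j)) = 0 := by
      have : ∀ k, c k * ((ξ ᵥ* A ^ k) ⬝ᵥ x (τ j)) = ξ ⬝ᵥ ((c k • A ^ k) *ᵥ x (τ j)) := by
        intro k
        rw [Matrix.smul_mulVec, dotProduct_smul, Matrix.dotProduct_mulVec, smul_eq_mul]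
      simp_rw [this]
      rw [← dotProduct_sum, ← Matrix.sum_mulVec, hCH]
      simp
    rw [h5, zero_add, Finset.sum_comm] at h4
    simp_rw [← sum_dotProduct] at h4
    exact h4
  have hG : ∀ i < N, G i = 0 := by
    intro i hi
    have := hPE (fun r => G r.1 r.2) (by
      intro j
      rw [Fintype.sum_prod_type, ← hG0 j, Finset.sum_range]
      rfl)
    funext a
    exact congrFun this (⟨i, hi⟩, a)
  have hzero : ∀ s, s < L + n → h s = 0 := by
    intro s
    induction s using Nat.strong_induction_on with
    | _ s ih =>
      intro hs
      have h1 := hG (L + n - 1 - s) (by omega)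
      simp only [G] at h1
      rw [Finset.sum_range_succ, if_pos (by omega), hcn, one_smul,
        Finset.sum_eq_zero, zero_add] at h1
      · rwa [show L + n - 1 - (L + n - 1 - s) = s by omega] at h1
      · intro k hk
        have hk := Finset.mem_range.mp hk
        split_ifs
        · rw [ih _ (by omega) (by omega), smul_zero]
        · rfl
  constructor
  · refine vecMul_eq_zero_of_rank (M := ctrbMat m n A B) (by simpa [Controllable] using hctrb) ?_
    funext ⟨i, a⟩
    have h1 := hzero (L + i) (by omega)
    rw [hh, relCoeff, dif_neg (by omega), show L + (i : ℕ) - L = i by omega] at h1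
    exact congrFun h1 a
  · funext b
    have h1 := hzero (L - 1 - b) (by omega)
    rw [hh, relCoeff, dif_pos (by omega)] at h1
    rw [Pi.zero_apply, ← h1]
    congr 1
    ext
    simp
    omega

/-! ### The left kernel of the Hankel matrix -/

/-- The input coefficients forced by the output coefficients `ζ` in an annihilator of the
behavior: `η_b = -∑_{k ≥ b} ζ_k M_{k-b}` with `M` the Markov parameters. -/
def etaOf {m p n L : ℕ} (A : Matrix (Fin n) (Fin n) ℝ) (B : Matrix (Fin n) (Fin m) ℝ)
    (C : Matrix (Fin p) (Fin n) ℝ) (D : Matrix (Fin p) (Fin m) ℝ) (ζ : Fin L × Fin p → ℝ)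
    (b : Fin L) : Fin m → ℝ :=
  -∑ k : Fin L, if (b : ℕ) ≤ k then (fun j => ζ (k, j)) ᵥ* markov A B C D (k - b) else 0

/-- The linear map completing output coefficients `ζ` to the row vector `(η(ζ), ζ)`. -/
def completion {m p n : ℕ} (L : ℕ) (A : Matrix (Fin n) (Fin n) ℝ) (B : Matrix (Fin n) (Fin m) ℝ)
    (C : Matrix (Fin p) (Fin n) ℝ) (D : Matrix (Fin p) (Fin m) ℝ) :
    (Fin L × Fin p → ℝ) →ₗ[ℝ] (Fin L × Fin (m + p) → ℝ) where
  toFun ζ := fun r => Fin.append (etaOf A B C D ζ r.1) (fun j => ζ (r.1, j)) r.2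
  map_add' ζ ζ' := by
    funext ⟨b, i⟩
    refine Fin.addCases (fun i => ?_) (fun i => ?_) i
    · simp only [Fin.append_left, Pi.add_apply, etaOf]
      rw [← Pi.add_apply, ← neg_add, ← Finset.sum_add_distrib]
      refine congrFun (congrArg _ (Finset.sum_congr rfl fun k _ => ?_)) i
      split_ifs
      · rw [← Matrix.add_vecMul]; rfl
      · simp
    · simp
  map_smul' a ζ := by
    funext ⟨b, i⟩
    refine Fin.addCases (fun i => ?_) (fun i => ?_) i
    · simp only [Fin.append_left, Pi.smul_apply, etaOf, RingHom.id_apply]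
      rw [← Pi.smul_apply, smul_neg, Finset.smul_sum]
      refine congrFun (congrArg _ (Finset.sum_congr rfl fun k _ => ?_)) i
      split_ifs
      · rw [← Matrix.smul_vecMul]; rfl
      · simp
    · simp

theorem completion_out {m p n L : ℕ} (A : Matrix (Fin n) (Fin n) ℝ) (B : Matrix (Fin n) (Fin m) ℝ)
    (C : Matrix (Fin p) (Fin n) ℝ) (D : Matrix (Fin p) (Fin m) ℝ) (ζ : Fin L × Fin p → ℝ)
    (b : Fin L) (j : Fin p) : completion L A B C D ζ (b, Fin.natAdd m j) = ζ (b, j) := by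
  simp [completion]

theorem completion_in {m p n L : ℕ} (A : Matrix (Fin n) (Fin n) ℝ) (B : Matrix (Fin n) (Fin m) ℝ)
    (C : Matrix (Fin p) (Fin n) ℝ) (D : Matrix (Fin p) (Fin m) ℝ) (ζ : Fin L × Fin p → ℝ)
    (b : Fin L) (j : Fin m) :
    completion L A B C D ζ (b, Fin.castAdd p j) = etaOf A B C D ζ b j := by
  simp [completion]

theorem vecMul_obsMat {p n : ℕ} (A : Matrix (Fin n) (Fin n) ℝ) (C : Matrix (Fin p) (Fin n) ℝ)
    (L : ℕ) (ζ : Fin L × Fin p → ℝ) :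
    ζ ᵥ* obsMat p n A C L = ∑ k : Fin L, (fun j => ζ (k, j)) ᵥ* (C * A ^ (k : ℕ)) := by
  funext i
  simp only [Matrix.vecMul, dotProduct, Fintype.sum_prod_type, Finset.sum_apply, obsMat]

/-- A window of a trajectory paired with a row vector `z = (η, ζ)`, expressed through the state and
inputs of that window. -/
theorem pairing_eq {m p n T L : ℕ} {A : Matrix (Fin n) (Fin n) ℝ} {B : Matrix (Fin n) (Fin m) ℝ}
    {C : Matrix (Fin p) (Fin n) ℝ} {D : Matrix (Fin p) (Fin m) ℝ} {x : ℕ → Fin n → ℝ}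
    {w : ℕ → Fin (m + p) → ℝ}
    (hx : ∀ t, t + 1 < T → x (t + 1) = A *ᵥ x t + B *ᵥ uPart m p w t)
    (hy : ∀ t, t < T → yPart m p w t = C *ᵥ x t + D *ᵥ uPart m p w t)
    (z : Fin L × Fin (m + p) → ℝ) (ζ : Fin L × Fin p → ℝ)
    (hζ : ∀ b j, ζ (b, j) = z (b, Fin.natAdd m j)) (t : ℕ) (ht : t + L ≤ T) :
    ∑ r, z r * w (t + r.1) r.2 = (ζ ᵥ* obsMat p n A C L) ⬝ᵥ x t +
      ∑ b : Fin L, ((fun i => z (b, Fin.castAdd p i)) - etaOf A B C D ζ b) ⬝ᵥ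
        uPart m p w (t + b) := by
  have h1 : ∑ r, z r * w (t + r.1) r.2 =
      ∑ b : Fin L, ((fun i => z (b, Fin.castAdd p i)) ⬝ᵥ uPart m p w (t + b)) +
      ∑ b : Fin L, ((fun j => ζ (b, j)) ⬝ᵥ yPart m p w (t + b)) := by
    rw [Fintype.sum_prod_type, ← Finset.sum_add_distrib]
    refine Finset.sum_congr rfl fun b _ => ?_
    rw [Fin.sum_univ_add]
    simp only [dotProduct, uPart, yPart, hζ]
  have h2 : ∀ k : Fin L, (fun j => ζ (k, j)) ⬝ᵥ yPart m p w (t + k) =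
      ((fun j => ζ (k, j)) ᵥ* (C * A ^ (k : ℕ))) ⬝ᵥ x t +
      ∑ b : Fin L, (if (b : ℕ) ≤ k then (fun j => ζ (k, j)) ᵥ* markov A B C D (k - b) else 0) ⬝ᵥ
        uPart m p w (t + b) := by
    intro k
    rw [output_iter hx hy t k L k.2 (by omega), dotProduct_add, Matrix.dotProduct_mulVec,
      dotProduct_sum]
    congr 1
    refine Finset.sum_congr rfl fun b _ => ?_
    split_ifs
    · rw [Matrix.dotProduct_mulVec]
    · simp
  rw [h1, Finset.sum_congr rfl fun k _ => h2 k, Finset.sum_add_distrib, Finset.sum_comm,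
    ← sum_dotProduct, ← vecMul_obsMat]
  simp only [← sum_dotProduct, etaOf, sub_neg_eq_add, add_dotProduct, Finset.sum_add_distrib]
  ring

/-- Under persistency of excitation, the left kernel of the Hankel matrix is the image under
`completion` of the left kernel of the observability matrix. -/
theorem ker_hankel_eq {m p n T L N nc : ℕ} {A : Matrix (Fin n) (Fin n) ℝ}
    {B : Matrix (Fin n) (Fin m) ℝ} {C : Matrix (Fin p) (Fin n) ℝ} {D : Matrix (Fin p) (Fin m) ℝ}
    {w : ℕ → Fin (m + p) → ℝ} (hw : IsTraj m p n A B C D T w)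
    (hctrb : Controllable m n A B) (hL : 1 ≤ L) (hLT : L ≤ T) (hN : n + L ≤ N) (τ : Fin nc → ℕ)
    (hτ : ∀ j, τ j + n + L ≤ T)
    (hPE : ∀ G : Fin N × Fin m → ℝ,
      (∀ j, ∑ r, G r * uPart m p w (τ j + r.1) r.2 = 0) → G = 0) :
    LinearMap.ker (Hankel (m + p) L T w).vecMulLinear =
      (LinearMap.ker (obsMat p n A C L).vecMulLinear).map (completion L A B C D) := by
  obtain ⟨x, hx, hy⟩ := hw
  have hmem : ∀ z, z ∈ LinearMap.ker (Hankel (m + p) L T w).vecMulLinear ↔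
      ∀ t, t + L ≤ T → ∑ r, z r * w (t + r.1) r.2 = 0 := by
    intro z
    rw [LinearMap.mem_ker, Matrix.vecMulLinear_apply]
    constructor
    · intro h t ht
      exact congrFun h ⟨t, by omega⟩
    · intro h
      funext t
      exact h t (by omega)
  ext z
  rw [hmem, Submodule.mem_map]
  constructor
  · intro h
    let ζ : Fin L × Fin p → ℝ := fun r => z (r.1, Fin.natAdd m r.2)
    obtain ⟨h1, h2⟩ := relation_trivial hx hctrb hL hN τ hτ hPE (ζ ᵥ* obsMat p n A C L)
      (fun b => (fun i => z (b, Fin.castAdd p i)) - etaOf A B C D ζ b) (fun t ht => by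
        rw [← pairing_eq hx hy z ζ (fun _ _ => rfl) t ht]
        exact h t ht)
    refine ⟨ζ, by simpa using h1, ?_⟩
    funext ⟨b, i⟩
    refine Fin.addCases (fun i => ?_) (fun i => ?_) i
    · rw [completion_in]
      have := congrFun (congrFun h2 b) i
      simp only [Pi.sub_apply, Pi.zero_apply] at this
      linarith
    · rw [completion_out]
  · rintro ⟨ζ, hζ, rfl⟩ t ht
    rw [pairing_eq hx hy _ ζ (fun b j => (completion_out A B C D ζ b j).symm) t ht]
    rw [LinearMap.mem_ker, Matrix.vecMulLinear_apply] at hζ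
    rw [hζ, zero_dotProduct, zero_add]
    refine Finset.sum_eq_zero fun b _ => ?_
    simp only [completion_in]
    simp

/-! ### The left kernel of the observability matrix -/

theorem rank_obsMat_of_le {p n k L : ℕ} (A : Matrix (Fin n) (Fin n) ℝ)
    (C : Matrix (Fin p) (Fin n) ℝ) (hkL : k ≤ L) (h : (obsMat p n A C k).rank = n) :
    (obsMat p n A C L).rank = n := by
  refine le_antisymm (by simpa using (obsMat p n A C L).rank_le_card_width) ?_
  have h1 : obsMat p n A C k =
      (obsMat p n A C L).submatrix (fun r => (Fin.castLE hkL r.1, r.2)) (Equiv.refl _) := rfl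
  calc n = (obsMat p n A C k).rank := h.symm
    _ ≤ _ := h1 ▸ Matrix.rank_submatrix_le _ _ _

/-- Output coefficients annihilating the observability matrix split into two such vectors vanishing
in block `ℓ`, respectively block `ℓ - 1`. By Assumption 1, `ζ_{ℓ-1} C A^{ℓ-1}` is a combination of
the rows of `C, …, CA^{ℓ-2}, CA^{ℓ+1}`, which gives the part with block `ℓ` equal to zero and block
`ℓ - 1` equal to that of `ζ`. -/
theorem split_output {p n ℓ : ℕ} (hl : 2 ≤ ℓ) (A : Matrix (Fin n) (Fin n) ℝ)
    (C : Matrix (Fin p) (Fin n) ℝ) (hassmp : (obsSMat p n ℓ A C).rank = n)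
    (ζ : Fin (ℓ + 2) × Fin p → ℝ) (hζ : ζ ᵥ* obsMat p n A C (ℓ + 2) = 0) :
    ∃ α β : Fin (ℓ + 2) × Fin p → ℝ, ζ = α + β ∧ α ᵥ* obsMat p n A C (ℓ + 2) = 0 ∧
      β ᵥ* obsMat p n A C (ℓ + 2) = 0 ∧ (∀ j, α (⟨ℓ, by omega⟩, j) = 0) ∧
      ∀ j, β (⟨ℓ - 1, by omega⟩, j) = 0 := by
  obtain ⟨γ, hγ⟩ := exists_vecMul_eq_of_rank (M := obsSMat p n ℓ A C) (by simpa using hassmp)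
    (-((fun j => ζ (⟨ℓ - 1, by omega⟩, j)) ᵥ* (C * A ^ (ℓ - 1))))
  obtain ⟨d, rfl⟩ : ∃ d, ℓ = d + 1 := ⟨ℓ - 1, by omega⟩
  let α : Fin (d + 1 + 2) × Fin p → ℝ := fun r =>
    if h : (r.1 : ℕ) < d then γ (⟨r.1, by omega⟩, r.2)
    else if (r.1 : ℕ) = d then ζ r
    else if (r.1 : ℕ) = d + 1 then 0 else γ (⟨d, by omega⟩, r.2)
  have hα : α ᵥ* obsMat p n A C (d + 1 + 2) = 0 := by
    have h1 : γ ᵥ* obsSMat p n (d + 1) A C =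
        ∑ k : Fin (d + 1), (fun j => γ (k, j)) ᵥ*
          (C * A ^ (if (k : ℕ) < d + 1 - 1 then (k : ℕ) else d + 1 + 1)) := by
      funext i
      simp only [Matrix.vecMul, dotProduct, Fintype.sum_prod_type, Finset.sum_apply, obsSMat]
    rw [h1, Fin.sum_univ_castSucc] at hγ
    rw [vecMul_obsMat, Fin.sum_univ_castSucc, Fin.sum_univ_castSucc, Fin.sum_univ_castSucc]
    simp only [Fin.val_castSucc, Fin.val_last, α] at hγ ⊢
    simp at hγ ⊢
    have h3 : (fun _ : Fin p => (0 : ℝ)) ᵥ* (C * A ^ (d + 1)) = 0 := Matrix.zero_vecMul _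
    rw [eq_neg_iff_add_eq_zero] at hγ
    rw [h3, add_zero, add_right_comm]
    exact hγ
  refine ⟨α, ζ - α, by simp, hα, by rw [Matrix.sub_vecMul, hζ, hα, sub_zero], ?_, ?_⟩
  · intro j
    simp [α]
  · intro j
    simp [α]

/-- Under controllability, observability with index `ℓ ≥ 2`,
`rank C = p < n` and Assumption 1, if the mosaic input matrix has full rank, then
`rank 𝓗_{ℓ+2}(w) = m(ℓ+2) + n`, the left kernel of `𝓗_{ℓ+2}(w)` has dimension
`p(ℓ+2) − n`, and this left kernel is spanned by `V1 ∪ V2`, where `V_i` consists of the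
left-kernel row vectors whose entries at the `p` output coordinates of block position
`ℓ+1−i` all vanish. -/
theorem stmt14 (m p n ℓ : ℕ) (hm : 1 ≤ m) (hp : 1 ≤ p) (hn : 1 ≤ n) (hl : 2 ≤ ℓ)
    (A : Matrix (Fin n) (Fin n) ℝ) (B : Matrix (Fin n) (Fin m) ℝ)
    (C : Matrix (Fin p) (Fin n) ℝ) (D : Matrix (Fin p) (Fin m) ℝ)
    (hctrb : Controllable m n A B)
    (hobs : ObsIndex p n A C ℓ)
    (hC : C.rank = p) (hpn : p < n)
    (hassmp : (obsSMat p n ℓ A C).rank = n)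
    (nc T : ℕ) (hT : (nc - 1) * (ℓ + 1) + n + ℓ + 3 ≤ T)
    (w : ℕ → Fin (m + p) → ℝ) (hw : IsTraj m p n A B C D T w)
    (hmosaic : (mosaicInput m n ℓ nc (uPart m p w)).rank = m * (n + ℓ + 3)) :
    (Hankel (m + p) (ℓ + 2) T w).rank = m * (ℓ + 2) + n ∧
    Module.finrank ℝ
      (LinearMap.ker (Hankel (m + p) (ℓ + 2) T w).vecMulLinear) = p * (ℓ + 2) - n ∧
    Submodule.span ℝ
      ({z : Fin (ℓ + 2) × Fin (m + p) → ℝ |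
          z ᵥ* Hankel (m + p) (ℓ + 2) T w = 0 ∧
          ∀ jp : Fin p, z (⟨ℓ, by omega⟩, Fin.natAdd m jp) = 0} ∪
       {z : Fin (ℓ + 2) × Fin (m + p) → ℝ |
          z ᵥ* Hankel (m + p) (ℓ + 2) T w = 0 ∧
          ∀ jp : Fin p, z (⟨ℓ - 1, by omega⟩, Fin.natAdd m jp) = 0}) =
      LinearMap.ker (Hankel (m + p) (ℓ + 2) T w).vecMulLinear := by
  have hnc : 1 ≤ nc := by
    rcases Nat.eq_zero_or_pos nc with h | h
    · subst h
      have h1 := (mosaicInput m n ℓ 0 (uPart m p w)).rank_le_card_width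
      have h2 : 0 < m * (n + ℓ + 3) := by positivity
      simp at h1
      omega
    · exact h
  have hker := ker_hankel_eq (L := ℓ + 2) (N := n + ℓ + 3) hw hctrb (by omega) (by omega)
    (by omega) (fun j : Fin nc => (j : ℕ) * (ℓ + 1))
    (fun j => by
      have : (j : ℕ) * (ℓ + 1) ≤ (nc - 1) * (ℓ + 1) :=
        Nat.mul_le_mul_right _ (by omega)
      omega)
    (fun G hG => vecMul_eq_zero_of_rank (M := mosaicInput m n ℓ nc (uPart m p w))
      (by rw [hmosaic]; simp [mul_comm]) (funext hG))
  have hinj : Function.Injective (completion (ℓ + 2) A B C D) := by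
    intro ζ ζ' h
    funext ⟨b, j⟩
    rw [← completion_out A B C D ζ b j, h, completion_out]
  have hobsL : (obsMat p n A C (ℓ + 2)).rank = n := rank_obsMat_of_le A C (by omega) hobs.1
  have hd1 := finrank_ker_vecMul_add_rank (obsMat p n A C (ℓ + 2))
  have hd2 := finrank_ker_vecMul_add_rank (Hankel (m + p) (ℓ + 2) T w)
  have hd3 : Module.finrank ℝ (LinearMap.ker (Hankel (m + p) (ℓ + 2) T w).vecMulLinear) =
      Module.finrank ℝ (LinearMap.ker (obsMat p n A C (ℓ + 2)).vecMulLinear) := by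
    rw [hker]
    exact (Submodule.equivMapOfInjective _ hinj _).finrank_eq.symm
  rw [hobsL] at hd1
  simp only [Fintype.card_prod, Fintype.card_fin] at hd1 hd2
  rw [mul_comm] at hd1
  have hexp : (ℓ + 2) * (m + p) = m * (ℓ + 2) + p * (ℓ + 2) := by ring
  refine ⟨by omega, by omega, le_antisymm ?_ ?_⟩
  · rw [Submodule.span_le]
    rintro z (hz | hz)
    · simpa using hz.1
    · simpa using hz.1
  · have hmem : ∀ α : Fin (ℓ + 2) × Fin p → ℝ, α ᵥ* obsMat p n A C (ℓ + 2) = 0 →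
        completion (ℓ + 2) A B C D α ᵥ* Hankel (m + p) (ℓ + 2) T w = 0 := by
      intro α hα
      have : completion (ℓ + 2) A B C D α ∈
          LinearMap.ker (Hankel (m + p) (ℓ + 2) T w).vecMulLinear := by
        rw [hker]
        exact Submodule.mem_map_of_mem (by simpa using hα)
      simpa using this
    intro z hz
    rw [hker] at hz
    obtain ⟨ζ, hζ, rfl⟩ := hz
    obtain ⟨α, β, rfl, hα, hβ, hα0, hβ0⟩ := split_output hl A C hassmp ζ (by simpa using hζ)
    rw [map_add]
    refine Submodule.add_mem _ (Submodule.subset_span (Or.inl ⟨hmem α hα, fun j => ?_⟩))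
      (Submodule.subset_span (Or.inr ⟨hmem β hβ, fun j => ?_⟩))
    · rw [completion_out, hα0]
    · rw [completion_out, hβ0]
end
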